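/- Let k be an algebraically closed field of characteristic zero, f ∈ S = k[x₁,…,xₙ], and ∂ ∈ k[y₁,…,yₙ] with ∂² ∘ f = 0; let m ≥ 2 and set g := f + X^m·(∂ ∘ f) ∈ k[x₁,…,xₙ,X]. Let J = k[y,α]·Ann_{k[y]}(f) + k[y,α]·α·Ann_{k[y]}(∂ ∘ f) ⊆ k[y₁,…,yₙ,α]. Then the k[t]-algebra B = k[y₁,…,yₙ,α,t]/((α^m − t·α − m!·∂) + J·k[y,α,t]) is flat as a k[t]-module; its fiber over t = 0 is isomorphic as a k-algebra to the apolar algebra of g, and for every λ ∈ k with λ ≠ 0 its fiber over t = λ, namely k[y₁,…,yₙ,α]/((α^m − λ·α − m!·∂) + J), is isomorphic as a k-algebra to the product of the apolar algebra of f with (m−1) copies of the apolar algebra of ∂ ∘ f. -/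

import Mathlib

/-- The apolarity action of `k[y₁,…,yₙ]` on `k[x₁,…,xₙ]`, in which `yᵢ` acts as
`∂/∂xᵢ`. -/
noncomputable def apolar {k : Type*} [CommSemiring k] {n : ℕ}
    (D f : MvPolynomial (Fin n) k) : MvPolynomial (Fin n) k :=
  ∑ a ∈ D.support, ∑ b ∈ f.support,
    MvPolynomial.monomial (b - a)
      (D.coeff a * f.coeff b * ∏ i : Fin n, ((b i).descFactorial (a i) : k))

/-- The ideal `J = k[y,α]·Ann_{k[y]}(f) + k[y,α]·α·Ann_{k[y]}(∂ ∘ f)` of `k[y₁,…,yₙ,α]`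
(realized as `k[y₁,…,yₙ₊₁]` with `α = yₙ₊₁`), built from the apolar ideals
`If = Ann_{k[y]}(f)` and `Idf = Ann_{k[y]}(∂ ∘ f)`. -/
noncomputable def auxIdeal {k : Type*} [Field k] {n : ℕ}
    (If Idf : Ideal (MvPolynomial (Fin n) k)) : Ideal (MvPolynomial (Fin (n + 1)) k) :=
  Ideal.map (MvPolynomial.rename (Fin.castSucc : Fin n → Fin (n + 1))) If ⊔
    Ideal.span ((fun e : MvPolynomial (Fin n) k =>
      MvPolynomial.X (Fin.last n) * MvPolynomial.rename Fin.castSucc e) '' (Idf : Set _))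

/-- The ideal `(α^m − t·α − m!·∂) + J·k[y,α,t]` of `k[y₁,…,yₙ,α,t]` (realized as
`k[y₁,…,yₙ₊₂]` with `α = yₙ₊₁`, `t = yₙ₊₂`). -/
noncomputable def totalIdeal {k : Type*} [Field k] {n : ℕ} (m : ℕ)
    (D : MvPolynomial (Fin n) k) (If Idf : Ideal (MvPolynomial (Fin n) k)) :
    Ideal (MvPolynomial (Fin (n + 2)) k) :=
  Ideal.span
    {(MvPolynomial.X (Fin.castSucc (Fin.last n)) : MvPolynomial (Fin (n + 2)) k) ^ m -
      MvPolynomial.X (Fin.last (n + 1)) * MvPolynomial.X (Fin.castSucc (Fin.last n)) -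
      MvPolynomial.C ((m.factorial : k)) *
        MvPolynomial.rename (Fin.castSucc ∘ Fin.castSucc) D}
  ⊔ Ideal.map (MvPolynomial.rename (Fin.castSucc : Fin (n + 1) → Fin (n + 2)))
      (auxIdeal If Idf)

/-- The structure map `k[t] → B = k[y,α,t]/((α^m − t·α − m!·∂) + J·k[y,α,t])`. -/
noncomputable def totalStructMap {k : Type*} [Field k] {n : ℕ} (m : ℕ)
    (D : MvPolynomial (Fin n) k) (If Idf : Ideal (MvPolynomial (Fin n) k)) :
    Polynomial k →+* (MvPolynomial (Fin (n + 2)) k ⧸ totalIdeal m D If Idf) :=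
  (Polynomial.aeval
    (Ideal.Quotient.mk (totalIdeal m D If Idf)
      (MvPolynomial.X (Fin.last (n + 1))))).toRingHom

/-!
Put `R = k[y₁,…,yₙ]`, `I = Ann(f)`, `I' = Ann(∂ ∘ f)` and `d = m!·∂`. Then `I ⊆ I'`, and
`d·I' ⊆ I` because `I' = (I : ∂)`. Hence reduction modulo a monic polynomial
`F = α^m - s·α - d` preserves the ideal `J` of polynomials in `α` with constant coefficient in `I`
and the other coefficients in `I'`, so taking remainders identifies `R[α]/((F) + J)` with
`R/I × (R/I')^(m-1)` as a module. Over `k[t]` with `s = t` this gives flatness.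

For `s = λ ≠ 0`, the polynomial `F` vanishes modulo `I` at `-d/λ`, and modulo `I'` at the `m - 1`
roots of `z^(m-1) = λ`. Evaluation at these points is onto `R/I × (R/I')^(m-1)` by the Chinese
remainder theorem, hence bijective: a surjective endomorphism of a finitely generated module is
injective. For `s = 0`, comparing coefficients of `X` in `p ∘ g = 0` shows that `p` annihilates `g`
exactly when its remainder modulo `α^m - d` lies in `J`.
-/

theorem map_map_of_forall_apply_eq {R S T F G H : Type*} [Semiring R] [Semiring S] [Semiring T]
    [FunLike F R S] [RingHomClass F R S] [FunLike G S T] [RingHomClass G S T] [FunLike H R T]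
    {φ : F} {ψ : G} {χ : H} (h : ∀ x, ψ (φ x) = χ x) (I : Ideal R) :
    (I.map φ).map ψ = I.map χ := by
  change (Ideal.span _).map ψ = Ideal.span _
  rw [Ideal.map_span, Set.image_image]
  simp only [h]

theorem nonempty_quotient_sup_ker_algEquiv {R A B : Type*} [CommRing R] [CommRing A] [CommRing B]
    [Algebra R A] [Algebra R B] {π : A →ₐ[R] B} (hπ : Function.Surjective π) (I : Ideal A) :
    Nonempty ((A ⧸ I ⊔ RingHom.ker π) ≃ₐ[R] B ⧸ I.map π) := by
  let ψ := (Ideal.Quotient.mkₐ R (I.map π)).comp π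
  have hker : RingHom.ker ψ = I ⊔ RingHom.ker π := by
    rw [← Ideal.comap_map_of_surjective' π hπ]
    ext x
    exact Ideal.Quotient.eq_zero_iff_mem
  exact ⟨(Ideal.quotientEquivAlgOfEq R hker.symm).trans
    (Ideal.quotientKerAlgEquivOfSurjective ((Ideal.Quotient.mkₐ_surjective R _).comp hπ))⟩

theorem flat_mk_comp_of_algEquiv {k A B S : Type*} [CommRing k] [CommRing A] [CommRing B]
    [CommRing S] [Algebra k A] [Algebra k B] (E : B ≃ₐ[k] A) (I : Ideal B) {φ : S →+* B}
    (h : ((Ideal.Quotient.mk (I.map E)).comp ((E : B →+* A).comp φ)).Flat) :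
    ((Ideal.Quotient.mk I).comp φ).Flat := by
  let e : B ⧸ I ≃+* A ⧸ I.map E := Ideal.quotientEquiv I _ (E : B ≃+* A) rfl
  exact (RingHom.Flat.comp_iff_of_bijective_left (g := (e : B ⧸ I →+* A ⧸ I.map E))
    e.bijective).1 h

theorem flat_prod {S M N : Type*} [CommSemiring S] [AddCommMonoid M] [AddCommMonoid N]
    [Module S M] [Module S N] [Module.Flat S M] [Module.Flat S N] : Module.Flat S (M × N) := by
  refine Module.Flat.iff_rTensor_injectiveₛ.2 fun P _ _ Q ↦ ?_
  have hconj : TensorProduct.prodRight S S P M N ∘ Q.subtype.rTensor (M × N) =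
      Prod.map (Q.subtype.rTensor M) (Q.subtype.rTensor N) ∘ TensorProduct.prodRight S S Q M N := by
    ext x
    all_goals induction x with
    | zero => simp
    | add x y hx hy => simp_all
    | tmul x y => simp
  rw [← EquivLike.comp_injective _ (TensorProduct.prodRight S S P M N), hconj,
    EquivLike.injective_comp]
  exact (Module.Flat.rTensor_preserves_injective_linearMap _ Q.subtype_injective).prodMap
    (Module.Flat.rTensor_preserves_injective_linearMap _ Q.subtype_injective)

theorem flat_pi {S ι : Type*} {M : ι → Type*} [Finite ι] [CommSemiring S]
    [∀ i, AddCommMonoid (M i)] [∀ i, Module S (M i)] [∀ i, Module.Flat S (M i)] :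
    Module.Flat S (∀ i, M i) := by
  classical
  have := Fintype.ofFinite ι
  exact Module.Flat.of_linearEquiv DFinsupp.linearEquivFunOnFintype.symm

section FlatPolynomial

open Polynomial

attribute [local instance] Polynomial.algebra

theorem flat_quotient_map_C {k A : Type*} [CommRing k] [CommRing A] [Algebra k A] (I : Ideal A)
    [Module.Flat k (A ⧸ I)] : Module.Flat k[X] (A[X] ⧸ I.map C) := by
  have : Module.Flat k[X] (A ⧸ I)[X] :=
    Module.Flat.isBaseChange k k[X] (A ⧸ I) _ Algebra.IsPushout.out
  have e : (A[X] ⧸ I.map C) ≃ₐ[k[X]] (A ⧸ I)[X] :=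
    (AlgEquiv.ofRingEquiv (f := I.polynomialQuotientEquivQuotientPolynomial) fun p ↦ by
      change I.polynomialQuotientEquivQuotientPolynomial (p.map (algebraMap k (A ⧸ I))) =
        Ideal.Quotient.mk _ (p.map (algebraMap k A))
      rw [← I.polynomialQuotientEquivQuotientPolynomial_map_mk, Polynomial.map_map]
      rfl).symm
  exact Module.Flat.of_linearEquiv e.toLinearEquiv

end FlatPolynomial

section StepIdeal

open Polynomial

variable {R : Type*} [CommRing R]

/-- The ideal `I·R[X] + X·I'·R[X]`, of the polynomials with constant coefficient in `I` and all
other coefficients in `I'` when `I ≤ I'`. It is the ideal `J` over an arbitrary base ring. -/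
noncomputable def stepIdeal (I I' : Ideal R) : Ideal R[X] :=
  I.map C ⊔ Ideal.span {X} * I'.map C

theorem map_stepIdeal {S : Type*} [CommRing S] (φ : R →+* S) (I I' : Ideal R) :
    (stepIdeal I I').map (mapRingHom φ) = stepIdeal (I.map φ) (I'.map φ) := by
  simp only [stepIdeal, Ideal.map_sup, Ideal.map_mul, Ideal.map_span, Ideal.map_map,
    mapRingHom_comp_C, Set.image_singleton, coe_mapRingHom, map_X]

variable {I I' : Ideal R}

theorem mem_stepIdeal_iff (hI : I ≤ I') {p : R[X]} :
    p ∈ stepIdeal I I' ↔ p.coeff 0 ∈ I ∧ ∀ i, p.coeff (i + 1) ∈ I' := by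
  simp only [stepIdeal, Submodule.mem_sup, Ideal.mem_span_singleton_mul]
  constructor
  · rintro ⟨a, ha, _, ⟨b, hb, rfl⟩, rfl⟩
    rw [Ideal.mem_map_C_iff] at ha hb
    refine ⟨by simpa using ha 0, fun i ↦ ?_⟩
    simpa using add_mem (hI (ha (i + 1))) (hb i)
  · rintro ⟨h₀, h⟩
    refine ⟨C (p.coeff 0), Ideal.mem_map_of_mem C h₀, _, ⟨p.divX, ?_, rfl⟩, ?_⟩
    · simpa [Ideal.mem_map_C_iff] using h
    · rw [add_comm, X_mul_divX_add]

theorem coeff_modByMonic_eq_zero_of_natDegree_le {F : R[X]} (hF : F.Monic) (p : R[X]) {i : ℕ}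
    (hi : F.natDegree ≤ i) : (p %ₘ F).coeff i = 0 := by
  nontriviality R
  refine coeff_eq_zero_of_degree_lt <| (degree_modByMonic_lt p hF).trans_le ?_
  rw [degree_eq_natDegree hF.ne_zero]
  exact_mod_cast hi

theorem divByMonic_mem_map_C {F : R[X]} (hF : F.Monic) {p : R[X]} (hp : p ∈ I.map C) :
    p /ₘ F ∈ I.map C := by
  rw [← I.mk_ker, ← ker_mapRingHom, RingHom.mem_ker, coe_mapRingHom] at hp ⊢
  rw [map_divByMonic _ hF, hp, zero_divByMonic]

theorem modByMonic_mem_stepIdeal (hI : I ≤ I') {F : R[X]} (hF : F.Monic)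
    (hF₀ : ∀ e ∈ I', F.coeff 0 * e ∈ I) {p : R[X]} (hp : p ∈ stepIdeal I I') :
    p %ₘ F ∈ stepIdeal I I' := by
  obtain ⟨hp₀, hp'⟩ := (mem_stepIdeal_iff hI).1 hp
  have hpI' : p ∈ I'.map C := Ideal.mem_map_C_iff.2 fun i ↦ i.casesOn (hI hp₀) hp'
  have hq : p /ₘ F ∈ I'.map C := divByMonic_mem_map_C hF hpI'
  rw [mem_stepIdeal_iff hI, modByMonic_eq_sub_mul_div]
  refine ⟨?_, fun i ↦ ?_⟩
  · rw [coeff_sub, mul_coeff_zero]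
    exact sub_mem hp₀ (hF₀ _ (Ideal.mem_map_C_iff.1 hq 0))
  · rw [coeff_sub]
    exact sub_mem (hp' i) (Ideal.mem_map_C_iff.1 (Ideal.mul_mem_left _ F hq) _)

theorem mem_span_sup_stepIdeal_iff (hI : I ≤ I') {F : R[X]} (hF : F.Monic)
    (hF₀ : ∀ e ∈ I', F.coeff 0 * e ∈ I) {p : R[X]} :
    p ∈ Ideal.span {F} ⊔ stepIdeal I I' ↔ p %ₘ F ∈ stepIdeal I I' := by
  rw [Ideal.mem_span_singleton_sup]
  constructor
  · rintro ⟨a, b, hb, rfl⟩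
    rw [add_modByMonic, (modByMonic_eq_zero_iff_dvd hF).2 (dvd_mul_left F a), zero_add]
    exact modByMonic_mem_stepIdeal hI hF hF₀ hb
  · intro h
    exact ⟨p /ₘ F, p %ₘ F, h, by rw [mul_comm, add_comm, modByMonic_add_div]⟩

theorem nonempty_linearEquiv_prod (hI : I ≤ I') {F : R[X]} (hF : F.Monic)
    (hF₀ : ∀ e ∈ I', F.coeff 0 * e ∈ I) {N : ℕ} (hN : F.natDegree = N + 1) :
    Nonempty ((R[X] ⧸ (Ideal.span {F} ⊔ stepIdeal I I')) ≃ₗ[R] (R ⧸ I) × (Fin N → R ⧸ I')) := by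
  nontriviality R
  let coeffs : R[X] →ₗ[R] (R ⧸ I) × (Fin N → R ⧸ I') :=
    ((I.mkQ ∘ₗ lcoeff R 0).prod (LinearMap.pi fun i ↦ I'.mkQ ∘ₗ lcoeff R (i + 1))) ∘ₗ
      modByMonicHom F
  have hker : coeffs.ker =
      (Ideal.span {F} ⊔ stepIdeal I I' : Ideal R[X]).restrictScalars R := by
    ext p
    rw [Submodule.restrictScalars_mem, mem_span_sup_stepIdeal_iff hI hF hF₀,
      mem_stepIdeal_iff hI]
    suffices (∀ i : Fin N, (p %ₘ F).coeff (i + 1) ∈ I') ↔ ∀ i, (p %ₘ F).coeff (i + 1) ∈ I' by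
      simpa [coeffs, funext_iff, Ideal.Quotient.eq_zero_iff_mem] using fun _ ↦ this
    refine ⟨fun h i ↦ ?_, fun h i ↦ h i⟩
    obtain hi | hi := lt_or_ge i N
    · exact h ⟨i, hi⟩
    · exact coeff_modByMonic_eq_zero_of_natDegree_le hF p (by lia : F.natDegree ≤ i + 1) ▸
        I'.zero_mem
  have hsurj : Function.Surjective coeffs := by
    rintro ⟨x, y⟩
    obtain ⟨x, rfl⟩ := Ideal.Quotient.mk_surjective x
    choose b hb using fun i ↦ Ideal.Quotient.mk_surjective (y i)
    let r := (degreeLTEquiv R (N + 1)).symm (Fin.cons x b)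
    have hcoeff (i : Fin (N + 1)) : r.1.coeff i = (Fin.cons x b : Fin (N + 1) → R) i :=
      congrFun ((degreeLTEquiv R (N + 1)).apply_symm_apply (Fin.cons x b)) i
    have hr : r.1 %ₘ F = r.1 := (modByMonic_eq_self_iff hF).2 <| by
      rw [degree_eq_natDegree hF.ne_zero, hN]
      exact mem_degreeLT.1 r.2
    refine ⟨r.1, Prod.ext ?_ (funext fun i ↦ ?_)⟩
    · simpa [coeffs, hr] using congrArg (Ideal.Quotient.mk I) (hcoeff 0)
    · simpa [coeffs, hr, hb] using congrArg (Ideal.Quotient.mk I') (hcoeff i.succ)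
  exact ⟨(Submodule.Quotient.restrictScalarsEquiv R _).symm ≪≫ₗ
    Submodule.quotEquivOfEq _ _ hker.symm ≪≫ₗ coeffs.quotKerEquivOfSurjective hsurj⟩

theorem flat_quotient_span_sup_stepIdeal {S : Type*} [CommRing S] [Algebra S R]
    [Module.Flat S (R ⧸ I)] [Module.Flat S (R ⧸ I')] (hI : I ≤ I') {F : R[X]} (hF : F.Monic)
    (hF₀ : ∀ e ∈ I', F.coeff 0 * e ∈ I) {N : ℕ} (hN : F.natDegree = N + 1) :
    Module.Flat S (R[X] ⧸ (Ideal.span {F} ⊔ stepIdeal I I')) := by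
  obtain ⟨e⟩ := nonempty_linearEquiv_prod hI hF hF₀ hN
  have : Module.Flat S (Fin N → R ⧸ I') := flat_pi
  have : Module.Flat S ((R ⧸ I) × (Fin N → R ⧸ I')) := flat_prod
  exact Module.Flat.of_linearEquiv (e.restrictScalars S)

theorem exists_forall_eval_sub_mem {ι : Type*} [Finite ι] (K : ι → Ideal R) (x : ι → R)
    (hx : Pairwise fun i j ↦ IsUnit (Ideal.Quotient.mk (K i ⊔ K j) (x i - x j))) (y : ι → R) :
    ∃ p : R[X], ∀ i, p.eval (x i) - y i ∈ K i := by
  have hcop : Pairwise (Function.onFun IsCoprime fun i ↦ (K i).comap (evalRingHom (x i))) := by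
    intro i j hij
    obtain ⟨c, hc⟩ := isUnit_iff_exists_inv.1 (hx hij)
    obtain ⟨c, rfl⟩ := Ideal.Quotient.mk_surjective c
    rw [← map_mul, ← map_one (Ideal.Quotient.mk _), Ideal.Quotient.mk_eq_mk_iff_sub_mem,
      Submodule.mem_sup] at hc
    obtain ⟨a, ha, b, hb, hab⟩ := hc
    refine Ideal.isCoprime_iff_exists.2
      ⟨(C (x i) - X) * C c - C a, ?_, (X - C (x j)) * C c - C b, ?_, ?_⟩
    · simpa using ha
    · simpa using hb
    · have hC := congrArg C hab
      simp only [map_add, map_sub, map_mul, map_one] at hC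
      linear_combination -hC
  obtain ⟨p, hp⟩ := Ideal.pi_quotient_surjective hcop fun i ↦ Ideal.Quotient.mk _ (C (y i))
  exact ⟨p, fun i ↦ by simpa [Ideal.Quotient.mk_eq_mk_iff_sub_mem] using hp i⟩

theorem eval_mem_of_mem_stepIdeal {x : R} (hx : ∀ e ∈ I', x * e ∈ I) {p : R[X]}
    (hp : p ∈ stepIdeal I I') : p.eval x ∈ I := by
  suffices stepIdeal I I' ≤ I.comap (evalRingHom x) from this hp
  refine sup_le ?_ ?_
  · rw [Ideal.map_le_iff_le_comap, Ideal.comap_comap]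
    exact fun e he ↦ by simpa using he
  · rw [Ideal.span_singleton_mul_le_iff]
    intro q hq
    have hq' : q.eval x ∈ I' := by
      rw [eval_eq_sum]
      exact sum_mem fun i _ ↦ I'.mul_mem_right _ (Ideal.mem_map_C_iff.1 hq i)
    simpa using hx _ hq'

theorem exists_eval_sub_mem_and_forall_eval_sub_mem {N : ℕ} {x₀ : R} {x : Fin N → R}
    (hunit₀ : ∀ j, IsUnit (Ideal.Quotient.mk I' (x₀ - x j)))
    (hunit : Pairwise fun i j ↦ IsUnit (Ideal.Quotient.mk I' (x i - x j))) (y₀ : R)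
    (y : Fin N → R) :
    ∃ p : R[X], p.eval x₀ - y₀ ∈ I ∧ ∀ j, p.eval (x j) - y j ∈ I' := by
  have hunits : Pairwise fun i j : Option (Fin N) ↦ IsUnit (Ideal.Quotient.mk
      (i.elim I (fun _ ↦ I') ⊔ j.elim I fun _ ↦ I') (i.elim x₀ x - j.elim x₀ x)) := by
    rintro (_ | i) (_ | j) hij
    · exact absurd rfl hij
    · exact (hunit₀ j).map (Ideal.Quotient.factor le_sup_right)
    · rw [← neg_sub, map_neg]
      exact ((hunit₀ i).map (Ideal.Quotient.factor le_sup_left)).neg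
    · exact (hunit fun h ↦ hij (congrArg some h)).map (Ideal.Quotient.factor le_sup_left)
  obtain ⟨p, hp⟩ := exists_forall_eval_sub_mem _ _ hunits fun i ↦ i.elim y₀ y
  exact ⟨p, hp none, fun j ↦ hp (some j)⟩

theorem nonempty_algEquiv_prod (hI : I ≤ I') {F : R[X]} (hF : F.Monic) {N : ℕ}
    (hN : F.natDegree = N + 1) {x₀ : R} {x : Fin N → R} (hx₀ : ∀ e ∈ I', x₀ * e ∈ I)
    (hFx₀ : F.eval x₀ ∈ I) (hFx : ∀ j, F.eval (x j) ∈ I')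
    (hunit₀ : ∀ j, IsUnit (Ideal.Quotient.mk I' (x₀ - x j)))
    (hunit : Pairwise fun i j ↦ IsUnit (Ideal.Quotient.mk I' (x i - x j))) :
    Nonempty ((R[X] ⧸ (Ideal.span {F} ⊔ stepIdeal I I')) ≃ₐ[R] (R ⧸ I) × (Fin N → R ⧸ I')) := by
  have hF₀ : ∀ e ∈ I', F.coeff 0 * e ∈ I := fun e he ↦ by
    obtain ⟨c, hc⟩ := sub_dvd_eval_sub x₀ 0 F
    rw [sub_zero, ← coeff_zero_eq_eval_zero] at hc
    convert sub_mem (I.mul_mem_right e hFx₀) (I.mul_mem_left c (hx₀ e he)) using 1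
    linear_combination -e * hc
  let evals : R[X] →ₐ[R] (R ⧸ I) × (Fin N → R ⧸ I') :=
    ((Ideal.Quotient.mkₐ R I).comp (aeval x₀)).prod
      (AlgHom.pi fun j ↦ (Ideal.Quotient.mkₐ R I').comp (aeval (x j)))
  have hker : ∀ p ∈ Ideal.span {F} ⊔ stepIdeal I I', evals p = 0 := by
    suffices Ideal.span {F} ⊔ stepIdeal I I' ≤ RingHom.ker evals from fun p hp ↦ this hp
    refine sup_le ((Ideal.span_singleton_le_iff_mem _).2 ?_) fun p hp ↦ ?_
    · simpa [evals, RingHom.mem_ker, funext_iff, Ideal.Quotient.eq_zero_iff_mem, aeval_def]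
        using ⟨hFx₀, hFx⟩
    · have hle : stepIdeal I I' ≤ stepIdeal I' I' := sup_le_sup_right (Ideal.map_mono hI) _
      simpa [evals, RingHom.mem_ker, funext_iff, Ideal.Quotient.eq_zero_iff_mem, aeval_def]
        using ⟨eval_mem_of_mem_stepIdeal hx₀ hp,
          fun j ↦ eval_mem_of_mem_stepIdeal (fun e he ↦ I'.mul_mem_left _ he) (hle hp)⟩
  have hsurj : Function.Surjective (Ideal.Quotient.liftₐ _ evals hker) := by
    rintro ⟨y₀, y⟩
    obtain ⟨y₀, rfl⟩ := Ideal.Quotient.mk_surjective y₀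
    choose b hb using fun i ↦ Ideal.Quotient.mk_surjective (y i)
    obtain ⟨p, hp₀, hp⟩ := exists_eval_sub_mem_and_forall_eval_sub_mem hunit₀ hunit y₀ b
    refine ⟨Ideal.Quotient.mk _ p, Prod.ext ?_ (funext fun j ↦ ?_)⟩
    · exact Ideal.Quotient.mk_eq_mk_iff_sub_mem _ _ |>.2 hp₀
    · exact (Ideal.Quotient.mk_eq_mk_iff_sub_mem _ _ |>.2 (hp j)).trans (hb j)
  obtain ⟨e⟩ := nonempty_linearEquiv_prod hI hF hF₀ hN
  have hinj : Function.Injective (Ideal.Quotient.liftₐ _ evals hker) :=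
    OrzechProperty.injective_of_surjective_of_injective e.toLinearMap
      (Ideal.Quotient.liftₐ _ evals hker).toLinearMap e.injective hsurj
  exact ⟨AlgEquiv.ofBijective _ ⟨hinj, hsurj⟩⟩

section Trinomial

variable (s d : R) {m : ℕ} (hm : 2 ≤ m)
include hm

theorem monic_X_pow_sub_C_mul_X_sub_C : (X ^ m - C s * X - C d).Monic := by
  rw [sub_sub]
  exact monic_X_pow_sub (degree_linear_le.trans_lt (by exact_mod_cast hm))

theorem natDegree_X_pow_sub_C_mul_X_sub_C [Nontrivial R] :
    (X ^ m - C s * X - C d).natDegree = m := by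
  rw [sub_sub, natDegree_sub_eq_left_of_natDegree_lt, natDegree_X_pow]
  exact natDegree_linear_le.trans_lt (hm.trans_eq (natDegree_X_pow m).symm)

theorem coeff_zero_X_pow_sub_C_mul_X_sub_C : (X ^ m - C s * X - C d).coeff 0 = -d := by
  simp [coeff_X_pow, show 0 ≠ m by lia]

end Trinomial

theorem flat_mk_comp_C_comp_mapRingHom [Nontrivial R] {k : Type*} [CommRing k] [Algebra k R]
    [Module.Flat k (R ⧸ I)] [Module.Flat k (R ⧸ I')] (hI : I ≤ I') {d : R}
    (hd : ∀ e ∈ I', d * e ∈ I) {m : ℕ} (hm : 2 ≤ m) :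
    ((Ideal.Quotient.mk (Ideal.span {X ^ m - C X * X - C (C d)} ⊔
      stepIdeal (I.map C) (I'.map C))).comp (C.comp (mapRingHom (algebraMap k R)))).Flat := by
  let _ : Algebra k[X] R[X] := Polynomial.algebra k R
  have := flat_quotient_map_C (k := k) I
  have := flat_quotient_map_C (k := k) I'
  have hCd : ∀ p ∈ I'.map C, (X ^ m - C X * X - C (C d) : R[X][X]).coeff 0 * p ∈ I.map C := by
    intro p hp
    rw [coeff_zero_X_pow_sub_C_mul_X_sub_C _ _ hm, neg_mul, neg_mem_iff, Ideal.mem_map_C_iff]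
    intro i
    rw [coeff_C_mul]
    exact hd _ (Ideal.mem_map_C_iff.1 hp i)
  set K := Ideal.span {X ^ m - C X * X - C (C d)} ⊔ stepIdeal (I.map C) (I'.map C)
  change (algebraMap k[X] (R[X][X] ⧸ K)).Flat
  rw [RingHom.flat_algebraMap_iff]
  exact flat_quotient_span_sup_stepIdeal (Ideal.map_mono hI)
    (monic_X_pow_sub_C_mul_X_sub_C _ _ hm) hCd
    ((natDegree_X_pow_sub_C_mul_X_sub_C _ _ hm).trans (by lia : m = m - 1 + 1))

theorem exists_injective_forall_pow_eq {k : Type*} [Field k] [IsSepClosed k] {N : ℕ}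
    (hN : (N : k) ≠ 0) {c : k} (hc : c ≠ 0) :
    ∃ z : Fin N → k, Function.Injective z ∧ ∀ j, z j ^ N = c := by
  have hsep : (X ^ N - C c).Separable := separable_X_pow_sub_C c hN hc
  have hcard : Fintype.card ((X ^ N - C c).rootSet k) = N := by
    rw [card_rootSet_eq_natDegree hsep (IsSepClosed.splits_codomain _ hsep), natDegree_X_pow_sub_C]
  let e := (Fintype.equivFinOfCardEq hcard).symm
  refine ⟨fun j ↦ e j, Subtype.val_injective.comp e.injective, fun j ↦ ?_⟩
  simpa [sub_eq_zero] using aeval_eq_zero_of_mem_rootSet (e j).2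

theorem nonempty_algEquiv_prod_of_isSepClosed {k : Type*} [Field k] [IsSepClosed k] [Algebra k R]
    (hI : I ≤ I') {d : R} (hd : ∀ e ∈ I', d * e ∈ I) (hdI' : d ∈ I') {m : ℕ} (hm : 2 ≤ m)
    (hm' : ((m - 1 : ℕ) : k) ≠ 0) {c : k} (hc : c ≠ 0) :
    Nonempty ((R[X] ⧸ (Ideal.span {X ^ m - C (algebraMap k R c) * X - C d} ⊔ stepIdeal I I')) ≃ₐ[k]
      (R ⧸ I) × (Fin (m - 1) → R ⧸ I')) := by
  nontriviality R
  obtain ⟨z, hz, hzc⟩ := exists_injective_forall_pow_eq hm' hc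
  have hz₀ (j) : z j ≠ 0 := fun hj ↦ hc <| by rw [← hzc j, hj, zero_pow (by lia)]
  set φ := algebraMap k R
  let x₀ := -φ c⁻¹ * d
  have hx₀I' : x₀ ∈ I' := I'.mul_mem_left _ hdI'
  have hx₀ (e : R) (he : e ∈ I') : x₀ * e ∈ I := mul_assoc _ d e ▸ I.mul_mem_left _ (hd e he)
  have hFx₀ : (X ^ m - C (φ c) * X - C d).eval x₀ ∈ I := by
    obtain ⟨l, rfl⟩ := Nat.exists_eq_add_of_le hm
    convert I.mul_mem_left (x₀ ^ l) (hx₀ x₀ hx₀I') using 1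
    have hc' : φ c * φ c⁻¹ = 1 := by rw [← map_mul, mul_inv_cancel₀ hc, map_one]
    simp only [x₀, eval_sub, eval_pow, eval_X, eval_mul, eval_C]
    linear_combination d * hc'
  have hFx (j) : (X ^ m - C (φ c) * X - C d).eval (φ (z j)) ∈ I' := by
    convert I'.neg_mem hdI'
    obtain ⟨N, rfl⟩ := Nat.exists_eq_add_of_le' (one_le_two.trans hm)
    simp only [eval_sub, eval_pow, eval_X, eval_mul, eval_C, ← map_pow, ← map_mul, ← hzc j]
    rw [Nat.add_sub_cancel, ← pow_succ, sub_self, zero_sub]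
  have hunit {a : k} (ha : a ≠ 0) : IsUnit (Ideal.Quotient.mk I' (φ a)) :=
    ((IsUnit.mk0 a ha).map φ).map _
  refine (nonempty_algEquiv_prod hI (monic_X_pow_sub_C_mul_X_sub_C _ d hm)
    ((natDegree_X_pow_sub_C_mul_X_sub_C _ _ hm).trans (by lia)) hx₀ hFx₀ hFx (fun j ↦ ?_)
    fun i j hij ↦ ?_).map (AlgEquiv.restrictScalars k)
  · rw [map_sub, Ideal.Quotient.eq_zero_iff_mem.2 hx₀I', zero_sub]
    exact (hunit (hz₀ j)).neg
  · simpa only [map_sub] using hunit (sub_ne_zero.2 (hz.ne hij))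

end StepIdeal

section Apolar

open MvPolynomial

variable {k : Type*} [CommSemiring k] {n : ℕ}

theorem apolar_eq_sum (D f : MvPolynomial (Fin n) k) {s t : Finset (Fin n →₀ ℕ)}
    (hs : D.support ⊆ s) (ht : f.support ⊆ t) :
    apolar D f = ∑ a ∈ s, ∑ b ∈ t,
      monomial (b - a) (D.coeff a * f.coeff b * ∏ i, ((b i).descFactorial (a i) : k)) := by
  rw [apolar, Finset.sum_subset hs]
  · refine Finset.sum_congr rfl fun a _ ↦ Finset.sum_subset ht fun b _ hb ↦ ?_
    simp [notMem_support_iff.1 hb]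
  · intro a _ ha
    simp [notMem_support_iff.1 ha]

theorem apolar_add_left (D E f : MvPolynomial (Fin n) k) :
    apolar (D + E) f = apolar D f + apolar E f := by
  classical
  rw [apolar_eq_sum (D + E) f support_add subset_rfl,
    apolar_eq_sum D f (Finset.subset_union_left (s₂ := E.support)) subset_rfl,
    apolar_eq_sum E f (Finset.subset_union_right (s₁ := D.support)) subset_rfl]
  simp only [← Finset.sum_add_distrib, coeff_add, ← map_add, add_mul]

theorem apolar_add_right (D f g : MvPolynomial (Fin n) k) :
    apolar D (f + g) = apolar D f + apolar D g := by
  classical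
  rw [apolar_eq_sum D (f + g) subset_rfl support_add,
    apolar_eq_sum D f subset_rfl (Finset.subset_union_left (s₂ := g.support)),
    apolar_eq_sum D g subset_rfl (Finset.subset_union_right (s₁ := f.support))]
  simp only [← Finset.sum_add_distrib, coeff_add, ← map_add, add_mul, mul_add]

theorem apolar_zero_left (f : MvPolynomial (Fin n) k) : apolar 0 f = 0 := by
  simp [apolar]

theorem apolar_zero_right (D : MvPolynomial (Fin n) k) : apolar D 0 = 0 := by
  simp [apolar]

theorem apolar_monomial (a b : Fin n →₀ ℕ) (c e : k) :
    apolar (monomial a c) (monomial b e) =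
      monomial (b - a) (c * e * ∏ i, ((b i).descFactorial (a i) : k)) := by
  classical
  rw [apolar_eq_sum _ _ support_monomial_subset support_monomial_subset]
  simp

theorem apolar_C (c : k) (f : MvPolynomial (Fin n) k) : apolar (C c) f = C c * f := by
  induction f using MvPolynomial.induction_on' with
  | add p q hp hq => rw [apolar_add_right, hp, hq, mul_add]
  | monomial b e => simp [← monomial_zero', apolar_monomial, monomial_mul]

theorem apolar_one (f : MvPolynomial (Fin n) k) : apolar 1 f = f := by
  rw [← C_1, apolar_C, C_1, one_mul]

theorem apolar_X (i : Fin n) (f : MvPolynomial (Fin n) k) : apolar (X i) f = pderiv i f := by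
  induction f using MvPolynomial.induction_on' with
  | add p q hp hq => rw [apolar_add_right, hp, hq, map_add]
  | monomial b e =>
    rw [X, apolar_monomial, pderiv_monomial, one_mul, Finset.prod_eq_single i]
    · simp
    · intro j _ hj
      simp [Finsupp.single_eq_of_ne hj]
    · simp

theorem apolar_mul (D E f : MvPolynomial (Fin n) k) :
    apolar (D * E) f = apolar D (apolar E f) := by
  induction f using MvPolynomial.induction_on' with
  | add p q hp hq => simp only [apolar_add_right, hp, hq]
  | monomial b e =>
    induction D using MvPolynomial.induction_on' with
    | add p q hp hq => simp only [add_mul, apolar_add_left, hp, hq]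
    | monomial a c =>
      induction E using MvPolynomial.induction_on' with
      | add p q hp hq => simp only [mul_add, apolar_add_left, apolar_add_right, hp, hq]
      | monomial a' c' =>
        have hdesc (i : Fin n) : (b i).descFactorial ((a + a') i) =
            ((b - a') i).descFactorial (a i) * (b i).descFactorial (a' i) := by
          rw [Finsupp.add_apply, Finsupp.tsub_apply,
            ← Nat.descFactorial_mul_descFactorial (Nat.le_add_left (a' i) (a i)),
            Nat.add_sub_cancel]
        have hsub : b - (a + a') = b - a' - a := by rw [add_comm, tsub_add_eq_tsub_tsub]
        simp only [monomial_mul, apolar_monomial, hdesc, hsub, Nat.cast_mul,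
          Finset.prod_mul_distrib]
        congr 1
        ring

theorem apolar_rename_castSucc (e h : MvPolynomial (Fin n) k) (j : ℕ) :
    apolar (rename Fin.castSucc e) (X (Fin.last n) ^ j * rename Fin.castSucc h) =
      X (Fin.last n) ^ j * rename Fin.castSucc (apolar e h) := by
  induction e using MvPolynomial.induction_on generalizing h with
  | C c => simp only [rename_C, apolar_C, map_mul, mul_left_comm]
  | add p q hp hq => simp only [map_add, apolar_add_left, hp, hq, mul_add]
  | mul_X p i hp =>
    have hX : pderiv i.castSucc (X (Fin.last n) ^ j : MvPolynomial (Fin (n + 1)) k) = 0 := by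
      rw [Derivation.leibniz_pow, pderiv_X_of_ne i.castSucc_ne_last.symm]
      simp
    rw [map_mul, rename_X, apolar_mul, apolar_X, Derivation.leibniz, hX,
      pderiv_rename (Fin.castSucc_injective n), smul_zero, add_zero, smul_eq_mul, hp, apolar_mul,
      apolar_X]

theorem apolar_X_last_pow (i j : ℕ) (h : MvPolynomial (Fin n) k) :
    apolar (X (Fin.last n) ^ i) (X (Fin.last n) ^ j * rename Fin.castSucc h) =
      j.descFactorial i • (X (Fin.last n) ^ (j - i) * rename Fin.castSucc h) := by
  have hrename : pderiv (Fin.last n) (rename Fin.castSucc h) = 0 := by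
    induction h using MvPolynomial.induction_on with
    | C c => simp
    | add p q hp hq => rw [map_add, map_add, hp, hq, add_zero]
    | mul_X p i hp => simp [hp, pderiv_X_of_ne i.castSucc_ne_last]
  induction i with
  | zero => simp [apolar_one]
  | succ i ih =>
    rw [pow_succ', apolar_mul, ih, apolar_X, map_nsmul, Derivation.leibniz, hrename,
      Derivation.leibniz_pow, pderiv_X_self, Nat.descFactorial_succ, ← Nat.sub_sub]
    simp only [smul_eq_mul, mul_one, nsmul_eq_mul]
    push_cast
    ring

/-- The apolar ideal `Ann(f) = {e | e ∘ f = 0}`, whose quotient is the apolar algebra of `f`. -/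
noncomputable def apolarIdeal (f : MvPolynomial (Fin n) k) : Ideal (MvPolynomial (Fin n) k) where
  carrier := {e | apolar e f = 0}
  zero_mem' := apolar_zero_left f
  add_mem' {a b} (ha : apolar a f = 0) (hb : apolar b f = 0) := by
    change apolar (a + b) f = 0
    rw [apolar_add_left, ha, hb, add_zero]
  smul_mem' c e (he : apolar e f = 0) := by
    change apolar (c * e) f = 0
    rw [apolar_mul, he, apolar_zero_right]

theorem mem_apolarIdeal {f e : MvPolynomial (Fin n) k} : e ∈ apolarIdeal f ↔ apolar e f = 0 :=
  Iff.rfl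

theorem mem_apolarIdeal_apolar {f D e : MvPolynomial (Fin n) k} :
    e ∈ apolarIdeal (apolar D f) ↔ e * D ∈ apolarIdeal f := by
  rw [mem_apolarIdeal, mem_apolarIdeal, apolar_mul]

theorem apolarIdeal_le_apolarIdeal_apolar (f D : MvPolynomial (Fin n) k) :
    apolarIdeal f ≤ apolarIdeal (apolar D f) := fun e he ↦
  mem_apolarIdeal_apolar.2 (mul_comm D e ▸ (apolarIdeal f).mul_mem_left D he)

theorem C_mul_mul_mem_apolarIdeal {f D e : MvPolynomial (Fin n) k} (c : k)
    (he : e ∈ apolarIdeal (apolar D f)) :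
    C c * D * e ∈ apolarIdeal f := by
  rw [mul_assoc, mul_comm D]
  exact Ideal.mul_mem_left _ _ (mem_apolarIdeal_apolar.1 he)

/-- The polynomial ring in `n + 1` variables as the polynomial ring in the last variable over the
polynomial ring in the first `n` variables. -/
noncomputable def splitLast (k : Type*) [CommSemiring k] (n : ℕ) :
    MvPolynomial (Fin (n + 1)) k ≃ₐ[k] Polynomial (MvPolynomial (Fin n) k) :=
  (renameEquiv k finSuccEquivLast).trans (optionEquivLeft k (Fin n))

@[simp]
theorem splitLast_X_last : splitLast k n (X (Fin.last n)) = Polynomial.X := by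
  simp [splitLast]

@[simp]
theorem splitLast_C (c : k) : splitLast k n (C c) = Polynomial.C (C c) := by
  simp [splitLast]

@[simp]
theorem splitLast_rename_castSucc (p : MvPolynomial (Fin n) k) :
    splitLast k n (rename Fin.castSucc p) = Polynomial.C p := by
  induction p using MvPolynomial.induction_on with
  | C a => rw [rename_C, splitLast_C]
  | add p q hp hq => rw [map_add, map_add, hp, hq, Polynomial.C_add]
  | mul_X p i hp =>
    rw [map_mul, map_mul, hp, Polynomial.C_mul, rename_X]
    simp [splitLast]

theorem splitLast_symm_monomial (i : ℕ) (e : MvPolynomial (Fin n) k) :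
    (splitLast k n).symm (Polynomial.monomial i e) =
      X (Fin.last n) ^ i * rename Fin.castSucc e := by
  rw [AlgEquiv.symm_apply_eq, map_mul, map_pow, splitLast_X_last, splitLast_rename_castSucc,
    Polynomial.X_pow_mul, Polynomial.C_mul_X_pow_eq_monomial]

theorem coeff_splitLast_apolar (p : MvPolynomial (Fin (n + 1)) k) (h : MvPolynomial (Fin n) k)
    (m j : ℕ) :
    (splitLast k n (apolar p (X (Fin.last n) ^ m * rename Fin.castSucc h))).coeff j =
      if j ≤ m then m.descFactorial (m - j) • apolar ((splitLast k n p).coeff (m - j)) h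
      else 0 := by
  obtain ⟨q, rfl⟩ := (splitLast k n).symm.surjective p
  rw [AlgEquiv.apply_symm_apply]
  induction q using Polynomial.induction_on' with
  | add p q hp hq =>
    rw [map_add, apolar_add_left, map_add, Polynomial.coeff_add, hp, hq, Polynomial.coeff_add,
      apolar_add_left]
    split_ifs <;> simp
  | monomial i e =>
    rw [splitLast_symm_monomial, apolar_mul, apolar_rename_castSucc, apolar_X_last_pow, map_nsmul,
      map_mul, map_pow, splitLast_X_last, splitLast_rename_castSucc, Polynomial.X_pow_mul,
      Polynomial.C_mul_X_pow_eq_monomial, Polynomial.coeff_smul, Polynomial.coeff_monomial,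
      Polynomial.coeff_monomial]
    obtain hi | hi := lt_or_ge m i
    · rw [Nat.descFactorial_of_lt hi, zero_smul, if_neg (by lia : i ≠ m - j), apolar_zero_left,
        smul_zero, ite_self]
    · split_ifs <;> first | lia | simp [apolar_zero_left, *]

end Apolar

section FiberIdeal

open MvPolynomial

variable {k : Type*} [Field k] {n : ℕ}

theorem mem_apolarIdeal_rename_add_iff {f h : MvPolynomial (Fin n) k} {m : ℕ} (hm : m ≠ 0)
    (hfact : (m.factorial : k) ≠ 0) {p : MvPolynomial (Fin (n + 1)) k} :
    p ∈ apolarIdeal (rename Fin.castSucc f + X (Fin.last n) ^ m * rename Fin.castSucc h) ↔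
      apolar ((splitLast k n p).coeff 0) f +
        m.factorial • apolar ((splitLast k n p).coeff m) h = 0 ∧
      ∀ i < m, (splitLast k n p).coeff i ∈ apolarIdeal h := by
  have hdesc {i : ℕ} (hi : i ≤ m) : (m.descFactorial i : k) ≠ 0 := by
    rw [← Nat.factorial_mul_descFactorial hi, Nat.cast_mul] at hfact
    exact right_ne_zero_of_mul hfact
  have hf : rename Fin.castSucc f = X (Fin.last n) ^ 0 * rename Fin.castSucc f := by
    rw [pow_zero, one_mul]
  rw [mem_apolarIdeal, hf, apolar_add_right,
    ← map_eq_zero_iff (splitLast k n) (splitLast k n).injective, map_add, Polynomial.ext_iff]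
  simp only [Polynomial.coeff_add, coeff_splitLast_apolar, Polynomial.coeff_zero]
  constructor
  · intro H
    refine ⟨by simpa [Nat.descFactorial_self] using H 0, fun i hi ↦ ?_⟩
    have := H (m - i)
    rw [if_neg (by lia), if_pos (by lia), Nat.sub_sub_self hi.le, zero_add,
      ← Nat.cast_smul_eq_nsmul k] at this
    exact (smul_eq_zero_iff_right (hdesc hi.le)).1 this
  · rintro ⟨H₀, H⟩ (_ | j)
    · simpa [Nat.descFactorial_self] using H₀
    · rw [if_neg (by lia), zero_add]
      split_ifs with hj
      · rw [H (m - (j + 1)) (by lia), smul_zero]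
      · rfl

/-- The ideal `(α^m − λ·α − m!·∂) + J` of `k[y₁,…,yₙ,α]` defining the fiber over `t = λ`. -/
noncomputable def fiberIdeal (m : ℕ) (lam : k) (D : MvPolynomial (Fin n) k)
    (If Idf : Ideal (MvPolynomial (Fin n) k)) : Ideal (MvPolynomial (Fin (n + 1)) k) :=
  Ideal.span {X (Fin.last n) ^ m - C lam * X (Fin.last n) -
    C (m.factorial : k) * rename Fin.castSucc D} ⊔ auxIdeal If Idf

theorem map_splitLast_auxIdeal (If Idf : Ideal (MvPolynomial (Fin n) k)) :
    (auxIdeal If Idf).map (splitLast k n) = stepIdeal If Idf := by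
  have hIdf : Idf.map Polynomial.C = Ideal.span (Polynomial.C '' Idf) := rfl
  rw [auxIdeal, stepIdeal, Ideal.map_sup,
    map_map_of_forall_apply_eq splitLast_rename_castSucc, Ideal.map_span,
    Set.image_image, hIdf, Ideal.span_mul_span', Set.singleton_mul, Set.image_image]
  simp only [map_mul, splitLast_X_last, splitLast_rename_castSucc]

theorem map_splitLast_fiberIdeal (m : ℕ) (lam : k) (D : MvPolynomial (Fin n) k)
    (If Idf : Ideal (MvPolynomial (Fin n) k)) :
    (fiberIdeal m lam D If Idf).map (splitLast k n) =
      Ideal.span {Polynomial.X ^ m - Polynomial.C (algebraMap k _ lam) * Polynomial.X -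
        Polynomial.C (C (m.factorial : k) * D)} ⊔ stepIdeal If Idf := by
  simp only [fiberIdeal, Ideal.map_sup, map_splitLast_auxIdeal, Ideal.map_span,
    Set.image_singleton, map_sub, map_mul, map_pow, splitLast_X_last, splitLast_C,
    splitLast_rename_castSucc, algebraMap_eq]

theorem mem_fiberIdeal_iff {m : ℕ} {lam : k} {D : MvPolynomial (Fin n) k}
    {If Idf : Ideal (MvPolynomial (Fin n) k)} {p : MvPolynomial (Fin (n + 1)) k} :
    p ∈ fiberIdeal m lam D If Idf ↔ splitLast k n p ∈
      Ideal.span {Polynomial.X ^ m - Polynomial.C (algebraMap k _ lam) * Polynomial.X -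
        Polynomial.C (C (m.factorial : k) * D)} ⊔ stepIdeal If Idf := by
  rw [← map_splitLast_fiberIdeal]
  refine ⟨Ideal.mem_map_of_mem _, fun h ↦ ?_⟩
  obtain ⟨q, hq, hqp⟩ := (Ideal.mem_map_of_equiv (splitLast k n) _).1 h
  rwa [← (splitLast k n).injective hqp]

theorem X_pow_sub_mem_apolarIdeal {f D : MvPolynomial (Fin n) k} (hD : apolar (D * D) f = 0)
    {m : ℕ} (hm : m ≠ 0) (hfact : (m.factorial : k) ≠ 0) :
    X (Fin.last n) ^ m - C (m.factorial : k) * rename Fin.castSucc D ∈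
      apolarIdeal (rename Fin.castSucc f +
        X (Fin.last n) ^ m * rename Fin.castSucc (apolar D f)) := by
  rw [mem_apolarIdeal_rename_add_iff hm hfact]
  simp only [map_sub, map_mul, map_pow, splitLast_X_last, splitLast_C, splitLast_rename_castSucc,
    Polynomial.coeff_sub, Polynomial.coeff_X_pow, Polynomial.coeff_C_mul, Polynomial.coeff_C,
    if_neg hm, if_neg hm.symm, if_true, mul_zero, zero_sub, sub_zero]
  constructor
  · rw [← neg_mul, ← C_neg, apolar_mul, apolar_C, apolar_one, nsmul_eq_mul, C_neg, neg_mul,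
      map_natCast, neg_add_cancel]
  · intro i hi
    rw [if_neg hi.ne, zero_sub, neg_mem_iff]
    refine Ideal.mul_mem_left _ _ ?_
    split_ifs
    · exact mem_apolarIdeal_apolar.2 hD
    · exact Ideal.zero_mem _

theorem apolarIdeal_rename_add_eq_fiberIdeal {f D : MvPolynomial (Fin n) k}
    (hD : apolar (D * D) f = 0) {m : ℕ} (hm : 2 ≤ m) (hfact : (m.factorial : k) ≠ 0) :
    apolarIdeal (rename Fin.castSucc f + X (Fin.last n) ^ m * rename Fin.castSucc (apolar D f)) =
      fiberIdeal m 0 D (apolarIdeal f) (apolarIdeal (apolar D f)) := by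
  have hm₀ : m ≠ 0 := by lia
  set Ig := apolarIdeal (rename Fin.castSucc f +
    X (Fin.last n) ^ m * rename Fin.castSucc (apolar D f))
  set d := C (m.factorial : k) * D
  set F := Polynomial.X ^ m - Polynomial.C (algebraMap k _ 0) * Polynomial.X - Polynomial.C d
  have hF : F.Monic := monic_X_pow_sub_C_mul_X_sub_C _ d hm
  have hI := apolarIdeal_le_apolarIdeal_apolar f D
  have hF₀ (e) (he : e ∈ apolarIdeal (apolar D f)) : F.coeff 0 * e ∈ apolarIdeal f := by
    rw [coeff_zero_X_pow_sub_C_mul_X_sub_C _ d hm, neg_mul, neg_mem_iff]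
    exact C_mul_mul_mem_apolarIdeal _ he
  have hFg : (splitLast k n).symm F ∈ Ig := by
    convert X_pow_sub_mem_apolarIdeal hD hm₀ hfact
    rw [AlgEquiv.symm_apply_eq]
    simp [F, d]
  ext p
  set r := splitLast k n p %ₘ F
  have hr (i) (hi : m ≤ i) : r.coeff i = 0 :=
    coeff_modByMonic_eq_zero_of_natDegree_le hF _ <|
      (natDegree_X_pow_sub_C_mul_X_sub_C _ d hm).trans_le hi
  have hp : p ∈ Ig ↔ (splitLast k n).symm r ∈ Ig := by
    simp only [r, Polynomial.modByMonic_eq_sub_mul_div, map_sub, map_mul,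
      AlgEquiv.symm_apply_apply, Submodule.sub_mem_iff_left Ig (Ig.mul_mem_right _ hFg)]
  rw [hp, mem_apolarIdeal_rename_add_iff hm₀ hfact, AlgEquiv.apply_symm_apply, hr m le_rfl,
    apolar_zero_left, smul_zero, add_zero, mem_fiberIdeal_iff,
    mem_span_sup_stepIdeal_iff hI hF hF₀, mem_stepIdeal_iff hI]
  refine and_congr_right fun hr₀ ↦ ⟨fun h i ↦ ?_, ?_⟩
  · obtain hi | hi := lt_or_ge (i + 1) m
    · exact h _ hi
    · rw [hr _ hi]
      exact Ideal.zero_mem _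
  · rintro h (_ | i) -
    · exact hI hr₀
    · exact h i

end FiberIdeal

section Fibers

open MvPolynomial

variable {k : Type*} [Field k] {n : ℕ}

/-- Substitution of `c` for the last variable; on `k[y₁,…,yₙ,α,t]` it is the specialization
`t = c`. -/
noncomputable def substLast (n : ℕ) (c : k) :
    MvPolynomial (Fin (n + 1)) k →ₐ[k] MvPolynomial (Fin n) k :=
  aeval (Fin.lastCases (C c) X)

@[simp]
theorem substLast_X_last (c : k) : substLast n c (X (Fin.last n)) = C c := by
  simp [substLast]

@[simp]
theorem substLast_C (c a : k) : substLast n c (C a) = C a :=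
  (substLast n c).commutes a

@[simp]
theorem substLast_rename_castSucc (c : k) (p : MvPolynomial (Fin n) k) :
    substLast n c (rename Fin.castSucc p) = p := by
  rw [substLast, aeval_rename]
  convert aeval_X_left_apply p
  ext i
  simp

theorem ker_substLast (c : k) :
    RingHom.ker (substLast n c) = Ideal.span {X (Fin.last n) - C c} := by
  refine le_antisymm (fun p hp ↦ ?_) <| (Ideal.span_singleton_le_iff_mem _).2 ?_
  · have hmk : ((Ideal.Quotient.mkₐ k (Ideal.span {X (Fin.last n) - C c})).comp
        (rename Fin.castSucc)).comp (substLast n c) = Ideal.Quotient.mkₐ k _ := by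
      ext i
      refine Fin.lastCases ?_ (fun i ↦ ?_) i
      · simpa using (Ideal.Quotient.mk_eq_mk_iff_sub_mem _ _).2 <| by
          rw [← neg_mem_iff, neg_sub]
          exact Ideal.mem_span_singleton_self _
      · rw [← rename_X]
        simp only [AlgHom.comp_apply, substLast_rename_castSucc]
    rw [← Ideal.Quotient.eq_zero_iff_mem]
    simpa [RingHom.mem_ker.1 hp] using (DFunLike.congr_fun hmk p).symm
  · rw [RingHom.mem_ker, map_sub, substLast_X_last, substLast_C, sub_self]

theorem map_substLast_totalIdeal (m : ℕ) (c : k) (D : MvPolynomial (Fin n) k)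
    (If Idf : Ideal (MvPolynomial (Fin n) k)) :
    (totalIdeal m D If Idf).map (substLast (n + 1) c) = fiberIdeal m c D If Idf := by
  rw [totalIdeal, fiberIdeal, Ideal.map_sup, Ideal.map_span, Set.image_singleton,
    map_map_of_forall_apply_eq (χ := RingHom.id _) (substLast_rename_castSucc c), Ideal.map_id,
    ← rename_rename, ← rename_X]
  simp only [map_sub, map_mul, map_pow, substLast_X_last, substLast_rename_castSucc, substLast_C]

theorem nonempty_fiber_algEquiv (m : ℕ) (c : k) (D : MvPolynomial (Fin n) k)
    (If Idf : Ideal (MvPolynomial (Fin n) k)) :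
    Nonempty ((MvPolynomial (Fin (n + 2)) k ⧸
        (totalIdeal m D If Idf ⊔ Ideal.span {X (Fin.last (n + 1)) - C c})) ≃ₐ[k]
      (MvPolynomial (Fin (n + 1)) k ⧸ fiberIdeal m c D If Idf)) := by
  rw [← ker_substLast, ← map_substLast_totalIdeal]
  exact nonempty_quotient_sup_ker_algEquiv
    (fun p ↦ ⟨rename Fin.castSucc p, substLast_rename_castSucc c p⟩) _

theorem nonempty_quotient_fiberIdeal_algEquiv_prod [IsSepClosed k] {f D : MvPolynomial (Fin n) k}
    (hD : apolar (D * D) f = 0) {m : ℕ} (hm : 2 ≤ m) (hfact : (m.factorial : k) ≠ 0) {c : k}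
    (hc : c ≠ 0) :
    Nonempty ((MvPolynomial (Fin (n + 1)) k ⧸
        fiberIdeal m c D (apolarIdeal f) (apolarIdeal (apolar D f))) ≃ₐ[k]
      (MvPolynomial (Fin n) k ⧸ apolarIdeal f) ×
        (Fin (m - 1) → MvPolynomial (Fin n) k ⧸ apolarIdeal (apolar D f))) := by
  have hm' : ((m - 1 : ℕ) : k) ≠ 0 := fun h ↦ hfact <| by
    obtain ⟨r, hr⟩ := Nat.dvd_factorial (by lia : 0 < m - 1) (Nat.sub_le m 1)
    rw [hr, Nat.cast_mul, h, zero_mul]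
  obtain ⟨e⟩ := nonempty_algEquiv_prod_of_isSepClosed (apolarIdeal_le_apolarIdeal_apolar f D)
    (fun e he ↦ C_mul_mul_mem_apolarIdeal (m.factorial : k) he)
    (Ideal.mul_mem_left _ _ (mem_apolarIdeal_apolar.2 hD)) hm hm' hc
  exact ⟨(Ideal.quotientEquivAlg _ _ (splitLast k n)
    (map_splitLast_fiberIdeal m c D _ _).symm).trans e⟩

end Fibers

section Flatness

open Polynomial

variable {k : Type*} [Field k] {n : ℕ}

/-- The identification of `k[y₁,…,yₙ,α,t]` with `k[y₁,…,yₙ][t][α]`. -/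
noncomputable def splitLastTwo (k : Type*) [Field k] (n : ℕ) :
    MvPolynomial (Fin (n + 2)) k ≃ₐ[k] (MvPolynomial (Fin n) k)[X][X] :=
  (splitLast k (n + 1)).trans ((mapAlgEquiv (splitLast k n)).trans
    (Bivariate.swap.restrictScalars k))

theorem splitLastTwo_X_last : splitLastTwo k n (MvPolynomial.X (Fin.last (n + 1))) = C X := by
  simp [splitLastTwo, Bivariate.swap_Y]

theorem splitLastTwo_rename_castSucc (p : MvPolynomial (Fin (n + 1)) k) :
    splitLastTwo k n (MvPolynomial.rename Fin.castSucc p) = mapRingHom C (splitLast k n p) := by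
  simp [splitLastTwo, Bivariate.swap_C]

theorem map_splitLastTwo_totalIdeal (m : ℕ) (D : MvPolynomial (Fin n) k)
    (If Idf : Ideal (MvPolynomial (Fin n) k)) :
    (totalIdeal m D If Idf).map (splitLastTwo k n) =
      Ideal.span {X ^ m - C X * X - C (C (MvPolynomial.C (m.factorial : k) * D))} ⊔
        stepIdeal (If.map C) (Idf.map C) := by
  have haux : ((auxIdeal If Idf).map (MvPolynomial.rename Fin.castSucc)).map (splitLastTwo k n) =
      stepIdeal (If.map C) (Idf.map C) := by
    rw [← map_stepIdeal, ← map_splitLast_auxIdeal, map_map_of_forall_apply_eq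
      (χ := (mapRingHom C).comp (splitLast k n : _ →+* _)) splitLastTwo_rename_castSucc]
    exact (map_map_of_forall_apply_eq (fun _ ↦ rfl) _).symm
  rw [totalIdeal, Ideal.map_sup, haux, Ideal.map_span, Set.image_singleton]
  congr 3
  rw [← MvPolynomial.rename_rename, ← MvPolynomial.rename_X Fin.castSucc,
    ← MvPolynomial.rename_C Fin.castSucc]
  simp only [map_sub, map_mul, map_pow, splitLastTwo_X_last, splitLastTwo_rename_castSucc,
    splitLast_X_last, splitLast_C, splitLast_rename_castSucc, coe_mapRingHom, map_X, map_C]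

theorem flat_totalStructMap {m : ℕ} (hm : 2 ≤ m) {D : MvPolynomial (Fin n) k}
    {If Idf : Ideal (MvPolynomial (Fin n) k)} (hI : If ≤ Idf)
    (hd : ∀ e ∈ Idf, MvPolynomial.C (m.factorial : k) * D * e ∈ If) :
    (totalStructMap m D If Idf).Flat := by
  have hstruct : totalStructMap m D If Idf = (Ideal.Quotient.mk (totalIdeal m D If Idf)).comp
      (aeval (MvPolynomial.X (Fin.last (n + 1)))).toRingHom :=
    RingHom.ext fun p ↦ aeval_algHom_apply (Ideal.Quotient.mkₐ k _) _ p
  have hsplit : (splitLastTwo k n : MvPolynomial (Fin (n + 2)) k →+* _).comp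
      (aeval (MvPolynomial.X (Fin.last (n + 1)))).toRingHom =
        C.comp (mapRingHom (algebraMap k (MvPolynomial (Fin n) k))) := by
    refine Polynomial.ringHom_ext (fun a ↦ ?_) ?_
    · simpa using (splitLastTwo k n).commutes a
    · simpa using splitLastTwo_X_last
  rw [hstruct]
  refine flat_mk_comp_of_algEquiv (k := k) (A := (MvPolynomial (Fin n) k)[X][X])
    (splitLastTwo k n) _ ?_
  rw [hsplit, map_splitLastTwo_totalIdeal]
  exact flat_mk_comp_C_comp_mapRingHom hI hd hm

end Flatness

theorem deformations_stmt19_general {k : Type*} [Field k] [IsSepClosed k] {n : ℕ}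
    {f D : MvPolynomial (Fin n) k} (hD : apolar (D * D) f = 0) {m : ℕ} (hm : 2 ≤ m)
    (hfact : (m.factorial : k) ≠ 0) :
    (totalStructMap m D (apolarIdeal f) (apolarIdeal (apolar D f))).Flat ∧
    Nonempty ((MvPolynomial (Fin (n + 2)) k ⧸
        (totalIdeal m D (apolarIdeal f) (apolarIdeal (apolar D f)) ⊔
          Ideal.span {MvPolynomial.X (Fin.last (n + 1))})) ≃ₐ[k]
      (MvPolynomial (Fin (n + 1)) k ⧸ (apolarIdeal (MvPolynomial.rename Fin.castSucc f +
        MvPolynomial.X (Fin.last n) ^ m * MvPolynomial.rename Fin.castSucc (apolar D f)) :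
          Ideal (MvPolynomial (Fin (n + 1)) k)))) ∧
    ∀ lam : k, lam ≠ 0 →
      Nonempty ((MvPolynomial (Fin (n + 1)) k ⧸
          fiberIdeal m lam D (apolarIdeal f) (apolarIdeal (apolar D f))) ≃ₐ[k]
        (MvPolynomial (Fin n) k ⧸ apolarIdeal f) ×
          (Fin (m - 1) → MvPolynomial (Fin n) k ⧸ apolarIdeal (apolar D f))) := by
  have hfiber := nonempty_fiber_algEquiv m 0 D (apolarIdeal f) (apolarIdeal (apolar D f))
  rw [MvPolynomial.C_0, sub_zero, ← apolarIdeal_rename_add_eq_fiberIdeal hD hm hfact] at hfiber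
  exact ⟨flat_totalStructMap hm (apolarIdeal_le_apolarIdeal_apolar f D)
    fun e he ↦ C_mul_mul_mem_apolarIdeal _ he, hfiber,
    fun lam hlam ↦ nonempty_quotient_fiberIdeal_algEquiv_prod hD hm hfact hlam⟩

/-- Let `k` be an algebraically closed field of characteristic zero,
`f ∈ k[x₁,…,xₙ]`, `∂ ∈ k[y₁,…,yₙ]` with `∂² ∘ f = 0`, `m ≥ 2`, and
`g = f + X^m·(∂ ∘ f) ∈ k[x₁,…,xₙ,X]`. Let
`J = k[y,α]·Ann_{k[y]}(f) + k[y,α]·α·Ann_{k[y]}(∂ ∘ f)`. Then the `k[t]`-algebra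
`B = k[y,α,t]/((α^m − t·α − m!·∂) + J·k[y,α,t])` is flat over `k[t]`; its fiber over
`t = 0` is isomorphic as a `k`-algebra to the apolar algebra of `g`; and for every
`λ ≠ 0` its fiber over `t = λ`, namely `k[y,α]/((α^m − λ·α − m!·∂) + J)`, is isomorphic
as a `k`-algebra to the product of the apolar algebra of `f` with `m − 1` copies of the
apolar algebra of `∂ ∘ f`. -/
theorem deformations_stmt19 {k : Type*} [Field k] [IsAlgClosed k] [CharZero k] {n : ℕ}
    (f D : MvPolynomial (Fin n) k)
    (hD : apolar (D * D) f = 0)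
    (m : ℕ) (hm : 2 ≤ m)
    (g : MvPolynomial (Fin (n + 1)) k)
    (hg : g = MvPolynomial.rename Fin.castSucc f +
      (MvPolynomial.X (Fin.last n)) ^ m *
        MvPolynomial.rename Fin.castSucc (apolar D f))
    -- the apolar ideals of f, ∂ ∘ f and g
    (If Idf : Ideal (MvPolynomial (Fin n) k)) (Ig : Ideal (MvPolynomial (Fin (n + 1)) k))
    (hIf : (If : Set (MvPolynomial (Fin n) k)) = {e | apolar e f = 0})
    (hIdf : (Idf : Set (MvPolynomial (Fin n) k)) = {e | apolar e (apolar D f) = 0})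
    (hIg : (Ig : Set (MvPolynomial (Fin (n + 1)) k)) = {e | apolar e g = 0}) :
    -- B is flat over k[t]
    RingHom.Flat (totalStructMap m D If Idf) ∧
    -- the fiber of B over t = 0 is isomorphic to the apolar algebra of g
    Nonempty
      ((MvPolynomial (Fin (n + 2)) k ⧸
          (totalIdeal m D If Idf ⊔
            Ideal.span {(MvPolynomial.X (Fin.last (n + 1)) : MvPolynomial (Fin (n + 2)) k)}))
        ≃ₐ[k] (MvPolynomial (Fin (n + 1)) k ⧸ Ig)) ∧
    -- the fiber over t = λ ≠ 0, namely k[y,α]/((α^m − λ·α − m!·∂) + J), is isomorphic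
    -- to (apolar algebra of f) × (m − 1 copies of the apolar algebra of ∂ ∘ f)
    (∀ lam : k, lam ≠ 0 →
      Nonempty
        ((MvPolynomial (Fin (n + 1)) k ⧸
            (Ideal.span
              {(MvPolynomial.X (Fin.last n) : MvPolynomial (Fin (n + 1)) k) ^ m -
                MvPolynomial.C lam * MvPolynomial.X (Fin.last n) -
                MvPolynomial.C ((m.factorial : k)) * MvPolynomial.rename Fin.castSucc D}
              ⊔ auxIdeal If Idf))
          ≃ₐ[k]
          ((MvPolynomial (Fin n) k ⧸ If) ×
            (Fin (m - 1) → MvPolynomial (Fin n) k ⧸ Idf)))) := by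
  obtain rfl : If = apolarIdeal f := SetLike.coe_injective hIf
  obtain rfl : Idf = apolarIdeal (apolar D f) := SetLike.coe_injective hIdf
  obtain rfl : Ig = apolarIdeal g := SetLike.coe_injective hIg
  subst hg
  exact deformations_stmt19_general hD hm (Nat.cast_ne_zero.2 m.factorial_ne_zero)
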